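/- arXiv:math/0209109 — 2 statements merged into one kernel-verified Lean document; each statement's English description precedes it below -/
import Mathlib

section
/- For every n ≥ 1, the map sending a permutation σ ∈ S_n to the ordered partition ←σ_1|⋯|←σ_p of {1,…,n} whose blocks are (the underlying sets of) the maximal strictly decreasing consecutive subwords of the word σ(1)σ(2)⋯σ(n), listed in order of occurrence, is a bijection from S_n onto the set of step increasing ordered partitions of {1,…,n}; likewise, the map sending σ to the ordered partition →σ_q|⋯|→σ_1 whose blocks are the maximal strictly increasing consecutive subwords of σ(1)⋯σ(n), listed in order of occurrence, is a bijection from S_n onto the set of step decreasing ordered partitions of {1,…,n}. -/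
open scoped Classical

namespace SU

/-- min of a finset of naturals (0 for the empty set). -/
def fmin (s : Finset ℕ) : ℕ := s.min.untopD 0
/-- max of a finset of naturals (0 for the empty set). -/
def fmax (s : Finset ℕ) : ℕ := s.max.unbotD 0

/-- `L` is an ordered partition of the finite set `S`. -/
def IsOrderedPartition (S : Finset ℕ) (L : List (Finset ℕ)) : Prop :=
  (∀ B ∈ L, B ≠ ∅) ∧ List.Pairwise Disjoint L ∧ L.foldr (· ∪ ·) ∅ = S

def StepIncreasing (L : List (Finset ℕ)) : Prop :=
  ∀ j, j + 1 < L.length → fmin (L.getD j ∅) < fmax (L.getD (j+1) ∅)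

def StepDecreasing (L : List (Finset ℕ)) : Prop :=
  ∀ j, j + 1 < L.length → fmin (L.getD (j+1) ∅) < fmax (L.getD j ∅)

/-- maximal strictly decreasing consecutive subwords, in order of occurrence. -/
def decRuns : List ℕ → List (List ℕ)
  | [] => []
  | a :: l =>
    match decRuns l with
    | [] => [[a]]
    | r :: rs => if r.headD 0 < a then (a :: r) :: rs else [a] :: r :: rs

/-- maximal strictly increasing consecutive subwords, in order of occurrence. -/
def incRuns : List ℕ → List (List ℕ)
  | [] => []
  | a :: l =>
    match incRuns l with
    | [] => [[a]]
    | r :: rs => if a < r.headD 0 then (a :: r) :: rs else [a] :: r :: rs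

/-- The word `σ(1) σ(2) ⋯ σ(n)` of a permutation, with values in `{1,…,n}`. -/
def permWord (n : ℕ) (σ : Equiv.Perm (Fin n)) : List ℕ :=
  List.ofFn (fun k => ((σ k : ℕ) + 1))

def decBlocks (w : List ℕ) : List (Finset ℕ) := (decRuns w).map List.toFinset
def incBlocks (w : List ℕ) : List (Finset ℕ) := (incRuns w).map List.toFinset

end SU


open scoped Classical

namespace SU

def inversions (w : List ℕ) : ℕ :=
  ((Finset.range w.length ×ˢ Finset.range w.length).filter
    (fun ab => ab.1 < ab.2 ∧ w.getD ab.2 0 < w.getD ab.1 0)).card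

/-- Sign of the permutation taking the increasing word to the concatenation of the
blocks of `L`, each listed in increasing order. -/
def psgn (L : List (Finset ℕ)) : ℤ :=
  (-1) ^ inversions ((L.map (fun s => s.sort (· ≤ ·))).flatten)

def shuffSgn (M N : Finset ℕ) : ℤ := psgn [M, N]

/-- degree of an ordered partition: `Σ (#block − 1)`. -/
def degp (L : List (Finset ℕ)) : ℕ := (L.map (fun s => s.card - 1)).sum

def eps1 (L : List (Finset ℕ)) : ℕ :=
  ∑ k ∈ Finset.range L.length, (L.length - 1 - k) * (L.getD k ∅).card

def sgn1 (L : List (Finset ℕ)) : ℤ := (-1) ^ eps1 L * psgn L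
def sgn2 (L : List (Finset ℕ)) : ℤ :=
  (-1) ^ (eps1 L + Nat.choose (L.length - 1) 2) * psgn L
def rsgn (L : List (Finset ℕ)) : ℤ :=
  (-1) ^ (∑ k ∈ Finset.range L.length, (L.getD k ∅).card * ((L.getD k ∅).card - 1) / 2)

/-- Entry of a matrix, with `0` outside the index range; `i` counts rows from the top,
`j` counts columns from the left, both 0-based. -/
def entry {q p : ℕ} (M : Matrix (Fin q) (Fin p) ℕ) (i j : ℕ) : ℕ :=
  if h : i < q ∧ j < p then M ⟨i, h.1⟩ ⟨j, h.2⟩ else 0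

def colBlock {q p : ℕ} (M : Matrix (Fin q) (Fin p) ℕ) (j : ℕ) : Finset ℕ :=
  ((Finset.range q).image (fun i => entry M i j)).erase 0

def rowBlock {q p : ℕ} (M : Matrix (Fin q) (Fin p) ℕ) (i : ℕ) : Finset ℕ :=
  ((Finset.range p).image (fun j => entry M i j)).erase 0

/-- column face `c(O) = U_1|⋯|U_p`. -/
def colFace {q p : ℕ} (M : Matrix (Fin q) (Fin p) ℕ) : List (Finset ℕ) :=
  (List.range p).map (colBlock M)

/-- row face `r(O) = V_q|⋯|V_1` (rows listed from bottom to top). -/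
def rowFace {q p : ℕ} (M : Matrix (Fin q) (Fin p) ℕ) : List (Finset ℕ) :=
  ((List.range q).map (rowBlock M)).reverse

/-- set of nonzero entries of a matrix. -/
def entrySet {q p : ℕ} (M : Matrix (Fin q) (Fin p) ℕ) : Finset ℕ :=
  (((Finset.range q) ×ˢ (Finset.range p)).image (fun ij => entry M ij.1 ij.2)).erase 0

def IsOrderedMatrix {q p : ℕ} (M : Matrix (Fin q) (Fin p) ℕ) : Prop :=
  0 < q ∧ 0 < p ∧
  entrySet M = Finset.Icc 1 (p + q - 1) ∧
  (∀ i < q, ∃ j < p, entry M i j ≠ 0) ∧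
  (∀ j < p, ∃ i < q, entry M i j ≠ 0) ∧
  (∀ i₁ j₁ i₂ j₂, entry M i₁ j₁ ≠ 0 → entry M i₂ j₂ ≠ 0 →
      entry M i₁ j₁ = entry M i₂ j₂ → i₁ = i₂ ∧ j₁ = j₂) ∧
  (∀ i j₁ j₂, j₁ < j₂ → entry M i j₁ ≠ 0 → entry M i j₂ ≠ 0 → entry M i j₁ < entry M i j₂) ∧
  (∀ j i₁ i₂, i₁ < i₂ → entry M i₁ j ≠ 0 → entry M i₂ j ≠ 0 → entry M i₁ j < entry M i₂ j)

def IsStepMatrix {q p : ℕ} (M : Matrix (Fin q) (Fin p) ℕ) : Prop :=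
  IsOrderedMatrix M ∧
  (∀ i j₁ j₂ j₃, j₁ ≤ j₂ → j₂ ≤ j₃ → entry M i j₁ ≠ 0 → entry M i j₃ ≠ 0 → entry M i j₂ ≠ 0) ∧
  (∀ j i₁ i₂ i₃, i₁ ≤ i₂ → i₂ ≤ i₃ → entry M i₁ j ≠ 0 → entry M i₃ j ≠ 0 → entry M i₂ j ≠ 0) ∧
  (∃! i, entry M i i ≠ 0) ∧
  (∀ i₁ i₂, entry M (i₁+1) i₁ ≠ 0 → entry M (i₂+1) i₂ ≠ 0 → i₁ = i₂) ∧
  (∀ i₁ i₂, entry M i₁ (i₁+1) ≠ 0 → entry M i₂ (i₂+1) ≠ 0 → i₁ = i₂)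

def DCond {q p : ℕ} (M : Matrix (Fin q) (Fin p) ℕ) (i j : ℕ) : Prop :=
  i + 1 < q ∧ j < p ∧ entry M (i+1) j = 0 ∧ entry M i j ≠ 0 ∧
  (∃ k < p, k ≠ j ∧ entry M i k ≠ 0) ∧
  (∀ ℓ < j, entry M (i+1) ℓ < entry M i j) ∧
  (∀ ℓ, j < ℓ → ℓ < p → entry M (i+1) ℓ ≠ 0 → entry M i j < entry M (i+1) ℓ)

/-- the down-shift operator `D_{i,j}` (0-based indices). -/
noncomputable def Dop {q p : ℕ} (M : Matrix (Fin q) (Fin p) ℕ) (i j : ℕ) :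
    Matrix (Fin q) (Fin p) ℕ :=
  if DCond M i j then
    Matrix.of fun a b =>
      if (a : ℕ) = i ∧ (b : ℕ) = j then 0
      else if (a : ℕ) = i + 1 ∧ (b : ℕ) = j then entry M i j
      else M a b
  else M

def RCond {q p : ℕ} (M : Matrix (Fin q) (Fin p) ℕ) (i j : ℕ) : Prop :=
  j + 1 < p ∧ i < q ∧ entry M i (j+1) = 0 ∧ entry M i j ≠ 0 ∧
  (∃ k < q, k ≠ i ∧ entry M k j ≠ 0) ∧
  (∀ ℓ < i, entry M ℓ (j+1) < entry M i j) ∧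
  (∀ ℓ, i < ℓ → ℓ < q → entry M ℓ (j+1) ≠ 0 → entry M i j < entry M ℓ (j+1))

/-- the right-shift operator `R_{i,j}` (0-based indices). -/
noncomputable def Rop {q p : ℕ} (M : Matrix (Fin q) (Fin p) ℕ) (i j : ℕ) :
    Matrix (Fin q) (Fin p) ℕ :=
  if RCond M i j then
    Matrix.of fun a b =>
      if (a : ℕ) = i ∧ (b : ℕ) = j then 0
      else if (a : ℕ) = i ∧ (b : ℕ) = j + 1 then entry M i j
      else M a b
  else M

inductive Shift
  | D (i j : ℕ)
  | R (i j : ℕ)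

noncomputable def applyShift {q p : ℕ} (g : Shift) (M : Matrix (Fin q) (Fin p) ℕ) :
    Matrix (Fin q) (Fin p) ℕ :=
  match g with
  | .D i j => Dop M i j
  | .R i j => Rop M i j

/-- `F` is obtained from `E` by a sequence of shift operators in which the down-shifts
occur with nondecreasing row indices and the right-shifts with nondecreasing column
indices (the list records the operators in order of application). -/
def DerivedFrom {q p : ℕ} (E F : Matrix (Fin q) (Fin p) ℕ) : Prop :=
  ∃ L : List Shift,
    (∀ i₁ j₁ i₂ j₂, List.Sublist [Shift.D i₁ j₁, Shift.D i₂ j₂] L → i₁ ≤ i₂) ∧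
    (∀ i₁ j₁ i₂ j₂, List.Sublist [Shift.R i₁ j₁, Shift.R i₂ j₂] L → j₁ ≤ j₂) ∧
    F = L.foldl (fun M g => applyShift g M) E

def IsConfigMatrix {q p : ℕ} (F : Matrix (Fin q) (Fin p) ℕ) : Prop :=
  IsOrderedMatrix F ∧ ∃ E, IsStepMatrix E ∧ DerivedFrom E F

/-- configuration sign of `F` derived from the step matrix `E`. -/
def csgnFrom {q p : ℕ} (E F : Matrix (Fin q) (Fin p) ℕ) : ℤ :=
  (-1) ^ Nat.choose q 2 * rsgn (colFace E) * sgn1 (rowFace F) * sgn2 (colFace E) *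
    sgn2 (colFace F)

noncomputable def csgn {q p : ℕ} (F : Matrix (Fin q) (Fin p) ℕ) : ℤ :=
  if h : ∃ E, IsStepMatrix E ∧ DerivedFrom E F then csgnFrom h.choose F else 1

end SU
section CoreC
open scoped Classical

namespace SU

/-- the row (0-based) of column `j` containing the value `v`. -/
noncomputable def rowOf {q p : ℕ} (M : Matrix (Fin q) (Fin p) ℕ) (j v : ℕ) : ℕ :=
  if h : ∃ i, i < q ∧ entry M i j = v then h.choose else q

/-- the column (0-based) of row `i` containing the value `v`. -/
noncomputable def colOf {q p : ℕ} (M : Matrix (Fin q) (Fin p) ℕ) (i v : ℕ) : ℕ :=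
  if h : ∃ j, j < p ∧ entry M i j = v then h.choose else p

/-- `R_{M_j}`: right-shifts moving each entry of `S` from column `j` to column `j+1`
(0-based), applied in increasing order of the entries. -/
noncomputable def applyRset {q p : ℕ} (M : Matrix (Fin q) (Fin p) ℕ) (j : ℕ) (S : Finset ℕ) :
    Matrix (Fin q) (Fin p) ℕ :=
  (S.sort (· ≤ ·)).foldl (fun acc v => Rop acc (rowOf acc j v) j) M

/-- `D_{N_i}`: down-shifts moving each entry of `S` from row `i` to row `i+1`
(0-based), applied in increasing order of the entries. -/
noncomputable def applyDset {q p : ℕ} (M : Matrix (Fin q) (Fin p) ℕ) (i : ℕ) (S : Finset ℕ) :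
    Matrix (Fin q) (Fin p) ℕ :=
  (S.sort (· ≤ ·)).foldl (fun acc v => Dop acc i (colOf acc i v)) M

/-- `D_{N_{q−1}} ⋯ D_{N_1} R_{M_{p−1}} ⋯ R_{M_1} E`, where `Mf j` is the set `M_j`
(`1 ≤ j ≤ p−1`) and `Nf i` is the set `N_i` (`1 ≤ i ≤ q−1`). -/
noncomputable def structComposite {q p : ℕ} (E : Matrix (Fin q) (Fin p) ℕ)
    (Mf Nf : ℕ → Finset ℕ) : Matrix (Fin q) (Fin p) ℕ :=
  (List.range (q-1)).foldl (fun acc i => applyDset acc i (Nf (i+1)))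
    ((List.range (p-1)).foldl (fun acc j => applyRset acc j (Mf (j+1))) E)

variable (K : Type) [CommRing K]

/-- boundary of a basis element of `C_*(P)`. -/
noncomputable def bnd (u : List (Finset ℕ)) : (List (Finset ℕ)) →₀ K :=
  ∑ k ∈ Finset.range u.length,
    ∑ M ∈ (u.getD k ∅).powerset,
      if M ≠ ∅ ∧ M ≠ u.getD k ∅ then
        ((((-1 : ℤ) ^ (degp (u.take k) + M.card)) * shuffSgn M (u.getD k ∅ \ M) : ℤ) : K) •
          Finsupp.single (u.take k ++ M :: (u.getD k ∅ \ M) :: u.drop (k+1)) (1 : K)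
      else 0

/-- `Δ_P` on the top cell `{1,…,m}`: the sum of `csgn F · c(F) ⊗ r(F)` over all
configuration matrices `F` with nonzero entry set `{1,…,m}` (with `Δ_P({1}) = {1}⊗{1}`). -/
noncomputable def deltaTop (m : ℕ) : (List (Finset ℕ) × List (Finset ℕ)) →₀ K :=
  if m = 1 then Finsupp.single ([{1}], [{1}]) 1
  else
    ∑ qq ∈ Finset.Icc 1 m, ∑ pp ∈ Finset.Icc 1 m,
      ∑ G : Fin qq → Fin pp → Fin (m+1),
        if IsConfigMatrix (Matrix.of fun i j => ((G i j : ℕ))) ∧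
            entrySet (Matrix.of fun i j => ((G i j : ℕ))) = Finset.Icc 1 m then
          ((csgn (Matrix.of fun i j => ((G i j : ℕ))) : ℤ) : K) •
            Finsupp.single (colFace (Matrix.of fun i j => ((G i j : ℕ))),
                            rowFace (Matrix.of fun i j => ((G i j : ℕ)))) 1
        else 0

/-- relabel a subset of `{1,…,#U}` along the order isomorphism `{1,…,#U} ≅ U`. -/
def relabel (U : Finset ℕ) (s : Finset ℕ) : Finset ℕ :=
  s.image (fun i => (U.sort (· ≤ ·)).getD (i - 1) 0)

/-- `Δ_P` on a basis element, via the standard comultiplicative extension with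
Koszul signs. -/
noncomputable def deltaFun : List (Finset ℕ) → ((List (Finset ℕ) × List (Finset ℕ)) →₀ K)
  | [] => Finsupp.single ([], []) 1
  | U :: L =>
      (deltaTop K U.card).sum fun ab c₁ =>
        (deltaFun L).sum fun ab' c₂ =>
          (c₁ * c₂ * (((-1 : ℤ) ^ (degp ab.2 * degp ab'.1) : ℤ) : K)) •
            Finsupp.single (ab.1.map (relabel U) ++ ab'.1, ab.2.map (relabel U) ++ ab'.2) 1

/-- linear extension of `Δ_P`. -/
noncomputable def deltaChain (f : (List (Finset ℕ)) →₀ K) :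
    (List (Finset ℕ) × List (Finset ℕ)) →₀ K :=
  f.sum fun u c => c • deltaFun K u

/-- `∂⊗1 + 1⊗∂` on the (concrete model of the) tensor square. -/
noncomputable def bndTensor (t : (List (Finset ℕ) × List (Finset ℕ)) →₀ K) :
    (List (Finset ℕ) × List (Finset ℕ)) →₀ K :=
  t.sum fun ab c =>
    c • ((bnd K ab.1).sum (fun a' c' => c' • Finsupp.single (a', ab.2) (1 : K)) +
         (((-1 : ℤ) ^ degp ab.1 : ℤ) : K) •
           (bnd K ab.2).sum (fun b' c' => c' • Finsupp.single (ab.1, b') (1 : K)))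

end SU
end CoreC
namespace SU

/-!
A run, being sorted, is recovered from its underlying set, so a word is recovered from its blocks by
sorting each block and concatenating. Conversely, let a list of nonempty sets be given and
concatenate the sorted blocks. The result is cut into runs exactly at the block boundaries if and
only if no two consecutive blocks `A`, `B` merge into one run, that is, the last (largest) letter of
`A` is not strictly below the first (smallest) letter of `B`. This means that some `a ∈ A` and
`b ∈ B` satisfy `b ≤ a`; for disjoint blocks the inequality is strict, which is the step condition.
The argument works for any linear order, and is applied to `≥` for decreasing runs and to `≤` for
increasing runs.
-/

section Runs

variable {α : Type*}

theorem splitBy_cons (R : α → α → Bool) (a d : α) (l : List α) :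
    (a :: l).splitBy R = match l.splitBy R with
      | [] => [[a]]
      | m :: ms => if R a (m.headD d) then (a :: m) :: ms else [a] :: m :: ms := by
  obtain ⟨hl, hne, hchain, hbreak⟩ := List.splitBy_eq_iff.1 (rfl : l.splitBy R = l.splitBy R)
  rcases hruns : l.splitBy R with _ | ⟨_ | ⟨b, m⟩, ms⟩ <;> rw [hruns] at hl hne hchain hbreak
  · exact List.splitBy_eq_iff.2 (by simp [hl])
  · simp at hne
  · by_cases hab : R a b <;> simp only [List.headD_cons, hab, if_true]
    · exact List.splitBy_eq_iff.2 ⟨by simp [hl], by simp_all, by simp_all, by cases ms <;> simp_all⟩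
    · exact List.splitBy_eq_iff.2 ⟨by simp [hl], by simp_all, by simp_all, by simp_all⟩

/-- For finite sets `A` and `B`, some element of `A` and some element of `B` are in inverted order.
For `r = (· < ·)` on nonempty sets this says `min B < max A`, and for `r = (· > ·)` it says
`min A < max B`. -/
def IsStep (r : α → α → Prop) (A B : Finset α) : Prop :=
  ∃ a ∈ A, ∃ b ∈ B, r b a

variable (r : α → α → Prop)

theorem isStep_not_swap_iff_of_disjoint [Std.Antisymm r] [Std.Total r] {A B : Finset α}
    (hAB : Disjoint A B) : IsStep (fun b a => ¬ r a b) A B ↔ IsStep r A B := by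
  refine exists_congr fun a => and_congr_right fun ha => exists_congr fun b =>
    and_congr_right fun hb => ⟨(total_of r a b).resolve_left, fun hba hab => ?_⟩
  exact Finset.disjoint_left.1 hAB ha (antisymm_of r hab hba ▸ hb)

theorem isChain_isStep_not_swap_iff [Std.Antisymm r] [Std.Total r] {L : List (Finset α)}
    (hL : L.Pairwise Disjoint) :
    L.IsChain (IsStep fun b a => ¬ r a b) ↔ L.IsChain (IsStep r) := by
  simp only [List.isChain_iff_getElem]
  exact forall₂_congr fun i hi => isStep_not_swap_iff_of_disjoint r
    (List.pairwise_iff_getElem.1 hL i (i + 1) (by omega) hi i.lt_succ_self)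

theorem pairwise_not_swap_iff [Std.Antisymm r] [Std.Total r] {l : List α} :
    l.Pairwise (fun a b => ¬ r b a) ↔ l.Pairwise r ∧ l.Nodup := by
  rw [List.Nodup, ← List.pairwise_and_iff]
  refine List.Pairwise.iff fun a b => ⟨fun hba => ?_, fun ⟨hab, hne⟩ hba => ?_⟩
  · have hab := (total_of r a b).resolve_right hba
    exact ⟨hab, fun h => hba (h ▸ hab)⟩
  · exact hne (antisymm_of r hab hba)

theorem rel_head_getLast_iff_isStep [IsTrans α r] [Std.Total r] [DecidableEq α] {l m : List α}
    (hl : l.Pairwise r) (hm : m.Pairwise r) (hl₀ : l ≠ []) (hm₀ : m ≠ []) :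
    r (m.head hm₀) (l.getLast hl₀) ↔ IsStep r l.toFinset m.toFinset := by
  simp only [IsStep, List.mem_toFinset]
  refine ⟨fun h => ⟨_, l.getLast_mem hl₀, _, m.head_mem hm₀, h⟩, ?_⟩
  rintro ⟨a, ha, b, hb, hba⟩
  have hhead : r (m.head hm₀) b := hm.rel_head hb
  have hlast : r a (l.getLast hl₀) := hl.rel_getLast ha
  exact trans_of r (trans_of r hhead hba) hlast

variable [DecidableRel r]

/-- The maximal consecutive subwords of `w` that are strictly increasing for the non-strict order
`r`, in order of occurrence. The strict part of a linear order `r` is encoded as `¬ r b a`. -/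
def strictRuns (w : List α) : List (List α) :=
  w.splitBy fun a b => !decide (r b a)

/-- The underlying sets of the maximal strictly `r`-increasing consecutive subwords of `w`, in
order of occurrence. -/
def runBlocks [DecidableEq α] (w : List α) : List (Finset α) :=
  (strictRuns r w).map List.toFinset

variable [IsTrans α r] [Std.Antisymm r] [Std.Total r]

theorem strictRuns_eq_iff [DecidableEq α] {w : List α} {rs : List (List α)} :
    strictRuns r w = rs ↔ w = rs.flatten ∧ [] ∉ rs ∧ (∀ l ∈ rs, l.Pairwise r ∧ l.Nodup) ∧
      (rs.map List.toFinset).IsChain (IsStep r) := by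
  have : IsTrans α fun a b => ¬ r b a :=
    ⟨fun a b c hba hcb hca => hba (trans_of r ((total_of r b c).resolve_right hcb) hca)⟩
  simp only [strictRuns, List.splitBy_eq_iff, Bool.not_eq_true', decide_eq_false_iff_not,
    Bool.not_eq_false', decide_eq_true_eq, List.isChain_iff_pairwise, pairwise_not_swap_iff,
    List.isChain_map]
  refine and_congr_right fun _ => and_congr_right fun hne => and_congr_right fun hrs => ?_
  refine List.IsChain.iff_of_mem_imp fun l m hl hm => ?_
  have hl₀ : l ≠ [] := ne_of_mem_of_not_mem hl hne
  have hm₀ : m ≠ [] := ne_of_mem_of_not_mem hm hne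
  rw [← rel_head_getLast_iff_isStep r (hrs l hl).1 (hrs m hm).1 hl₀ hm₀]
  exact ⟨fun ⟨_, _, h⟩ => h, fun h => ⟨hl₀, hm₀, h⟩⟩

theorem map_sort_runBlocks [DecidableEq α] (w : List α) :
    (runBlocks r w).map (Finset.sort · r) = strictRuns r w := by
  obtain ⟨-, -, hsorted, -⟩ := (strictRuns_eq_iff r (w := w)).1 rfl
  rw [runBlocks, List.map_map]
  refine (List.map_congr_left fun l hl => ?_).trans (List.map_id _)
  exact (List.toFinset_sort r (hsorted l hl).2).2 (hsorted l hl).1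

theorem strictRuns_flatten_map_sort {L : List (Finset α)} (hne : ∅ ∉ L)
    (hstep : L.IsChain (IsStep r)) :
    strictRuns r (L.map (Finset.sort · r)).flatten = L.map (Finset.sort · r) := by
  refine (strictRuns_eq_iff r).2 ⟨rfl, ?_, ?_, ?_⟩
  · simpa [← List.length_eq_zero_iff] using hne
  · simp
  · simpa [Function.comp_def] using hstep

theorem bijOn_runBlocks [DecidableEq α] :
    Set.BijOn (runBlocks r) Set.univ {L | ∅ ∉ L ∧ L.IsChain (IsStep r)} := by
  refine Set.InvOn.bijOn (f' := fun L => (L.map (Finset.sort · r)).flatten)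
    ⟨fun w _ => ?_, fun L ⟨hne, hstep⟩ => ?_⟩ (fun w _ => ?_) (Set.mapsTo_univ _ _)
  · simp only [map_sort_runBlocks]
    exact List.flatten_splitBy _ w
  · simp [runBlocks, strictRuns_flatten_map_sort r hne hstep, Function.comp_def]
  · obtain ⟨-, hne, -, hstep⟩ := (strictRuns_eq_iff r (w := w)).1 rfl
    exact ⟨by simpa [runBlocks] using hne, hstep⟩

end Runs

section OrderedPartitions

theorem foldr_union_map_toFinset {α : Type*} [DecidableEq α] (rs : List (List α)) :
    (rs.map List.toFinset).foldr (· ∪ ·) ∅ = rs.flatten.toFinset := by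
  induction rs with
  | nil => rfl
  | cons l rs ih => simp [ih]

theorem isOrderedPartition_map_toFinset_iff {S : Finset ℕ} {rs : List (List ℕ)}
    (hne : [] ∉ rs) (hnodup : ∀ l ∈ rs, l.Nodup) :
    IsOrderedPartition S (rs.map List.toFinset) ↔ rs.flatten.Nodup ∧ rs.flatten.toFinset = S := by
  have hblocks : ∀ B ∈ rs.map List.toFinset, B ≠ ∅ := by
    simpa [List.forall_mem_map] using fun l hl => ne_of_mem_of_not_mem hl hne
  rw [IsOrderedPartition, foldr_union_map_toFinset, List.nodup_flatten, List.pairwise_map]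
  simp only [List.disjoint_toFinset_iff_disjoint]
  exact ⟨fun h => ⟨⟨hnodup, h.2.1⟩, h.2.2⟩, fun h => ⟨hblocks, h.1.2, h.2⟩⟩

variable (r : ℕ → ℕ → Prop) [DecidableRel r] [IsTrans ℕ r] [Std.Antisymm r] [Std.Total r]

theorem isOrderedPartition_runBlocks_iff {S : Finset ℕ} {w : List ℕ} :
    IsOrderedPartition S (runBlocks r w) ↔ w.Nodup ∧ w.toFinset = S := by
  obtain ⟨hw, hne, hsorted, -⟩ := (strictRuns_eq_iff r (w := w)).1 rfl
  rw [runBlocks, isOrderedPartition_map_toFinset_iff hne fun l hl => (hsorted l hl).2, ← hw]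

theorem bijOn_runBlocks_isOrderedPartition (S : Finset ℕ) :
    Set.BijOn (runBlocks r) {w | w.Nodup ∧ w.toFinset = S}
      {L | IsOrderedPartition S L ∧ L.IsChain (IsStep fun b a => ¬ r a b)} := by
  have htarget : {L | IsOrderedPartition S L ∧ L.IsChain (IsStep fun b a => ¬ r a b)} ⊆
      {L | ∅ ∉ L ∧ L.IsChain (IsStep r)} := fun L ⟨hL, hstep⟩ =>
    ⟨fun h => hL.1 ∅ h rfl, (isChain_isStep_not_swap_iff r hL.2.1).1 hstep⟩
  convert (bijOn_runBlocks r).subset_right htarget using 1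
  ext w
  have hw := (bijOn_runBlocks r).mapsTo (Set.mem_univ w)
  simp only [Set.univ_inter]
  change _ ↔ IsOrderedPartition S (runBlocks r w) ∧ (runBlocks r w).IsChain _
  rw [and_iff_left_of_imp fun h => (isChain_isStep_not_swap_iff r h.2.1).2 hw.2]
  exact (isOrderedPartition_runBlocks_iff r).symm

end OrderedPartitions

section NaturalNumbers

theorem forall_getD_iff_isChain {α : Type*} (R : α → α → Prop) (d : α) (L : List α) :
    (∀ j, j + 1 < L.length → R (L.getD j d) (L.getD (j + 1) d)) ↔ L.IsChain R := by
  rw [List.isChain_iff_getElem]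
  refine forall₂_congr fun j hj => ?_
  rw [List.getD_eq_getElem _ _ hj, List.getD_eq_getElem _ _ (by omega)]

theorem fmin_lt_fmax_iff {A B : Finset ℕ} (hA : A ≠ ∅) (hB : B ≠ ∅) :
    fmin A < fmax B ↔ ∃ a ∈ A, ∃ b ∈ B, a < b := by
  have hmin : fmin A = A.min' (Finset.nonempty_iff_ne_empty.2 hA) := by
    rw [fmin, ← Finset.coe_min', WithTop.untopD_coe]
  have hmax : fmax B = B.max' (Finset.nonempty_iff_ne_empty.2 hB) := by
    rw [fmax, ← Finset.coe_max', WithBot.unbotD_coe]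
  rw [hmin, hmax, Finset.min', Finset.inf'_lt_iff]
  simp only [Finset.max', Finset.lt_sup'_iff, id]

theorem stepIncreasing_iff {L : List (Finset ℕ)} (hL : ∀ B ∈ L, B ≠ ∅) :
    StepIncreasing L ↔ L.IsChain (IsStep (· > ·)) :=
  (forall_getD_iff_isChain (fun A B => fmin A < fmax B) ∅ L).trans <|
    List.IsChain.iff_of_mem_imp fun A B hA hB => fmin_lt_fmax_iff (hL A hA) (hL B hB)

theorem stepDecreasing_iff {L : List (Finset ℕ)} (hL : ∀ B ∈ L, B ≠ ∅) :
    StepDecreasing L ↔ L.IsChain (IsStep (· < ·)) := by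
  refine (forall_getD_iff_isChain (fun A B => fmin B < fmax A) ∅ L).trans <|
    List.IsChain.iff_of_mem_imp fun A B hA hB => ?_
  rw [fmin_lt_fmax_iff (hL B hB) (hL A hA), IsStep]
  tauto

theorem decRuns_eq_strictRuns (w : List ℕ) : decRuns w = strictRuns (· ≥ ·) w := by
  induction w with
  | nil => rfl
  | cons a w ih =>
    rw [decRuns, ih, strictRuns, strictRuns, splitBy_cons _ a 0]
    simp only [ge_iff_le, Bool.not_eq_true', decide_eq_false_iff_not, not_le]
    cases List.splitBy _ w <;> rfl

theorem incRuns_eq_strictRuns (w : List ℕ) : incRuns w = strictRuns (· ≤ ·) w := by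
  induction w with
  | nil => rfl
  | cons a w ih =>
    rw [incRuns, ih, strictRuns, strictRuns, splitBy_cons _ a 0]
    simp only [Bool.not_eq_true', decide_eq_false_iff_not, not_le]
    cases List.splitBy _ w <;> rfl

theorem decBlocks_eq_runBlocks : decBlocks = runBlocks (· ≥ ·) :=
  funext fun w => congrArg (List.map List.toFinset) (decRuns_eq_strictRuns w)

theorem incBlocks_eq_runBlocks : incBlocks = runBlocks (· ≤ ·) :=
  funext fun w => congrArg (List.map List.toFinset) (incRuns_eq_strictRuns w)

theorem permWord_injective (n : ℕ) : Function.Injective (permWord n) := fun _ _ h => by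
  ext k
  simpa using congrFun (List.ofFn_injective h) k

theorem nodup_permWord (n : ℕ) (σ : Equiv.Perm (Fin n)) : (permWord n σ).Nodup :=
  List.nodup_ofFn.2 fun _ _ h => σ.injective (Fin.ext (Nat.succ_injective h))

theorem toFinset_permWord (n : ℕ) (σ : Equiv.Perm (Fin n)) :
    (permWord n σ).toFinset = Finset.Icc 1 n := by
  refine Finset.eq_of_subset_of_card_le (fun x hx => ?_) ?_
  · obtain ⟨k, rfl⟩ := List.mem_ofFn.1 (List.mem_toFinset.1 hx)
    exact Finset.mem_Icc.2 ⟨Nat.le_add_left 1 _, (σ k).isLt⟩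
  · rw [List.toFinset_card_of_nodup (nodup_permWord n σ), permWord, List.length_ofFn,
      Nat.card_Icc, Nat.add_sub_cancel]

theorem exists_permWord_eq {n : ℕ} {w : List ℕ} (hnodup : w.Nodup)
    (hw : w.toFinset = Finset.Icc 1 n) : ∃ σ, permWord n σ = w := by
  have hlength : w.length = n := by
    rw [← List.toFinset_card_of_nodup hnodup, hw, Nat.card_Icc, Nat.add_sub_cancel]
  subst hlength
  have hbound (k : Fin w.length) : 1 ≤ w[k] ∧ w[k] ≤ w.length := by
    rw [← Finset.mem_Icc, ← hw, List.mem_toFinset]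
    exact List.getElem_mem k.isLt
  let f : Fin w.length → Fin w.length := fun k => ⟨w[k] - 1, by grind⟩
  have hf : Function.Injective f := fun i j hij =>
    Fin.ext <| hnodup.getElem_inj_iff.1 <|
      Nat.pred_inj (hbound i).1 (hbound j).1 (congrArg Fin.val hij)
  refine ⟨Equiv.ofBijective f (Finite.injective_iff_bijective.1 hf), ?_⟩
  calc permWord w.length _ = List.ofFn fun k : Fin w.length => w[k] :=
        congrArg List.ofFn (funext fun k => Nat.sub_add_cancel (hbound k).1)
    _ = w := List.ofFn_getElem

theorem bijOn_permWord (n : ℕ) :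
    Set.BijOn (permWord n) Set.univ {w | w.Nodup ∧ w.toFinset = Finset.Icc 1 n} :=
  ⟨fun σ _ => ⟨nodup_permWord n σ, toFinset_permWord n σ⟩, (permWord_injective n).injOn,
    fun _ ⟨hnodup, hw⟩ => (exists_permWord_eq hnodup hw).imp fun _ h => ⟨trivial, h⟩⟩

theorem statement0_general (S : Finset ℕ) :
    Set.BijOn decBlocks {w | w.Nodup ∧ w.toFinset = S}
      {L | IsOrderedPartition S L ∧ StepIncreasing L} ∧
    Set.BijOn incBlocks {w | w.Nodup ∧ w.toFinset = S}
      {L | IsOrderedPartition S L ∧ StepDecreasing L} := by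
  constructor
  · have hbij := bijOn_runBlocks_isOrderedPartition (· ≥ ·) S
    simp only [ge_iff_le, not_le] at hbij
    rw [decBlocks_eq_runBlocks]
    convert hbij using 3 with L
    exact and_congr_right fun hL => stepIncreasing_iff hL.1
  · have hbij := bijOn_runBlocks_isOrderedPartition (· ≤ ·) S
    simp only [not_le] at hbij
    rw [incBlocks_eq_runBlocks]
    convert hbij using 3 with L
    exact and_congr_right fun hL => stepDecreasing_iff hL.1

end NaturalNumbers

/-- For `n ≥ 1`, `σ ↦ ←σ₁|⋯|←σ_p` (underlying sets of the maximal
strictly decreasing consecutive subwords, in order of occurrence) is a bijection from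
`S_n` onto the step increasing ordered partitions of `{1,…,n}`, and
`σ ↦ →σ_q|⋯|→σ₁` (maximal strictly increasing consecutive subwords, in order of
occurrence) is a bijection from `S_n` onto the step decreasing ordered partitions. -/
theorem statement0 (n : ℕ) (hn : 1 ≤ n) :
    Set.BijOn (fun σ : Equiv.Perm (Fin n) => decBlocks (permWord n σ)) Set.univ
      {L : List (Finset ℕ) | IsOrderedPartition (Finset.Icc 1 n) L ∧ StepIncreasing L} ∧
    Set.BijOn (fun σ : Equiv.Perm (Fin n) => incBlocks (permWord n σ)) Set.univ
      {L : List (Finset ℕ) | IsOrderedPartition (Finset.Icc 1 n) L ∧ StepDecreasing L} :=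
  (statement0_general (Finset.Icc 1 n)).imp (·.comp (bijOn_permWord n)) (·.comp (bijOn_permWord n))

end SU
end

section
/- Let O be an ordered matrix and let (i,j) be a position such that both operators in the composition D_{i,j+1}∘R_{i,j} act nontrivially (R_{i,j} changes O and D_{i,j+1} changes R_{i,j}O) and both operators in the composition R_{i+1,j}∘D_{i,j} act nontrivially. Then D_{i,j+1}R_{i,j}O = R_{i+1,j}D_{i,j}O. -/
/-!
A nontrivial shift moves one nonzero entry to an adjacent vacant position, so both composites move
the entry in position `(i, j)` to `(i + 1, j + 1)`, through `(i, j + 1)` or through `(i + 1, j)`.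
The two intermediate positions are vacant, so neither path leaves a trace. Once `(i + 1, j)` is
vacant, the inequalities that permit the first path also permit the second.
-/

open scoped Classical

open scoped Classical

namespace SU

variable {q p : ℕ} {M : Matrix (Fin q) (Fin p) ℕ} {i j : ℕ}

/-- The matrix obtained from `M` by moving the entry in position `x` to position `y` and leaving
`0` in position `x`; whatever stood in position `y` is overwritten. Positions are pairs of 0-based
(row, column) indices in `ℕ`, as for `entry`. A nontrivial shift `D_{i,j}` or `R_{i,j}` is such
a move. -/
def moveEntry (M : Matrix (Fin q) (Fin p) ℕ) (x y : ℕ × ℕ) : Matrix (Fin q) (Fin p) ℕ :=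
  Matrix.of fun a b =>
    if ((a : ℕ), (b : ℕ)) = x then 0
    else if ((a : ℕ), (b : ℕ)) = y then entry M x.1 x.2
    else M a b

theorem entry_apply (M : Matrix (Fin q) (Fin p) ℕ) (a : Fin q) (b : Fin p) :
    entry M a b = M a b := by
  simp [entry]

theorem entry_moveEntry {x y : ℕ × ℕ} (hyq : y.1 < q) (hyp : y.2 < p) (a b : ℕ) :
    entry (moveEntry M x y) a b =
      if (a, b) = x then 0 else if (a, b) = y then entry M x.1 x.2 else entry M a b := by
  by_cases hab : a < q ∧ b < p
  · simp [entry, moveEntry, hab]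
  · have hne : (a, b) ≠ y := by
      rintro rfl
      exact hab ⟨hyq, hyp⟩
    simp [entry, hab, hne]

theorem moveEntry_moveEntry {x y z : ℕ × ℕ} (hxy : x ≠ y) (hyz : y ≠ z) (hxz : x ≠ z)
    (hyq : y.1 < q) (hyp : y.2 < p) (hy : entry M y.1 y.2 = 0) :
    moveEntry (moveEntry M x y) y z = moveEntry M x z := by
  ext a b
  have hab : ((a : ℕ), (b : ℕ)) = y → M a b = 0 := by
    rintro rfl
    rwa [entry_apply] at hy
  have hmoved : entry (moveEntry M x y) y.1 y.2 = entry M x.1 x.2 := by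
    simp [entry_moveEntry hyq hyp, hxy.symm]
  simp only [moveEntry, Matrix.of_apply] at hmoved ⊢
  grind

theorem DCond.dop_eq_moveEntry (h : DCond M i j) :
    Dop M i j = moveEntry M (i, j) (i + 1, j) := by
  simp only [Dop, if_pos h, moveEntry, Prod.mk.injEq]

theorem RCond.rop_eq_moveEntry (h : RCond M i j) :
    Rop M i j = moveEntry M (i, j) (i, j + 1) := by
  simp only [Rop, if_pos h, moveEntry, Prod.mk.injEq]

theorem dCond_of_dop_ne_self (h : Dop M i j ≠ M) : DCond M i j :=
  of_not_not fun hD => h (if_neg hD)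

theorem rCond_of_rop_ne_self (h : Rop M i j ≠ M) : RCond M i j :=
  of_not_not fun hR => h (if_neg hR)

theorem DCond.entry_dop (h : DCond M i j) (a b : ℕ) :
    entry (Dop M i j) a b =
      if (a, b) = (i, j) then 0 else if (a, b) = (i + 1, j) then entry M i j else entry M a b := by
  rw [h.dop_eq_moveEntry, entry_moveEntry h.1 h.2.1]

theorem RCond.entry_rop (h : RCond M i j) (a b : ℕ) :
    entry (Rop M i j) a b =
      if (a, b) = (i, j) then 0 else if (a, b) = (i, j + 1) then entry M i j else entry M a b := by
  rw [h.rop_eq_moveEntry, entry_moveEntry h.2.1 h.1]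

theorem RCond.entry_rop_succ_row (h : RCond M i j) (b : ℕ) :
    entry (Rop M i j) (i + 1) b = entry M (i + 1) b := by
  simp [h.entry_rop]

theorem DCond.entry_dop_succ_col (h : DCond M i j) (a : ℕ) :
    entry (Dop M i j) a (j + 1) = entry M a (j + 1) := by
  simp [h.entry_dop]

theorem RCond.dCond_of_dCond_rop (hR : RCond M i j) (hDR : DCond (Rop M i j) i (j + 1))
    (hbelow : entry M (i + 1) j = 0) : DCond M i j := by
  have hmoved : entry (Rop M i j) i (j + 1) = entry M i j := by simp [hR.entry_rop]
  obtain ⟨hi, -, hdiag, -, ⟨k, hk, hkj, hk0⟩, hleft, hright⟩ := hDR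
  simp only [hR.entry_rop_succ_row, hmoved] at hdiag hleft hright
  have hk' : k ≠ j ∧ entry M i k ≠ 0 := by simpa [hR.entry_rop, hkj] using hk0
  refine ⟨hi, Nat.lt_of_succ_lt hR.1, hbelow, hR.2.2.2.1, ⟨k, hk, hk'⟩,
    fun ℓ hℓ => hleft ℓ (by omega), fun ℓ hjℓ hℓ hℓ0 => hright ℓ ?_ hℓ hℓ0⟩
  have hℓ_ne : ℓ ≠ j + 1 := by
    rintro rfl
    exact hℓ0 hdiag
  omega

theorem DCond.rCond_dop (hD : DCond M i j) (hR : RCond M i j)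
    (hdiag : entry M (i + 1) (j + 1) = 0) : RCond (Dop M i j) (i + 1) j := by
  have hmoved : entry (Dop M i j) (i + 1) j = entry M i j := by simp [hD.entry_dop]
  have ⟨hi, _, hbelow, hij, _⟩ := hD
  obtain ⟨hj, -, hnext, -, ⟨k, hk, hki, hk0⟩, habove, hunder⟩ := hR
  have hki' : k ≠ i + 1 := by
    rintro rfl
    exact hk0 hbelow
  simp only [RCond, hD.entry_dop_succ_col, hmoved]
  refine ⟨hj, hi, hdiag, hij, ⟨k, hk, hki', by simpa [hD.entry_dop, hki, hki'] using hk0⟩,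
    fun ℓ hℓ => ?_, fun ℓ hℓ => hunder ℓ (by omega)⟩
  rcases Nat.lt_succ_iff_lt_or_eq.mp hℓ with hlt | rfl
  · exact habove ℓ hlt
  · rw [hnext]
    exact Nat.pos_of_ne_zero hij

theorem statement3_general {q p : ℕ} (O : Matrix (Fin q) (Fin p) ℕ) (i j : ℕ)
    (hbelow : entry O (i + 1) j = 0)
    (h₁ : Rop O i j ≠ O) (h₂ : Dop (Rop O i j) i (j + 1) ≠ Rop O i j) :
    Dop (Rop O i j) i (j + 1) = Rop (Dop O i j) (i + 1) j := by
  have hR : RCond O i j := rCond_of_rop_ne_self h₁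
  have hDR : DCond (Rop O i j) i (j + 1) := dCond_of_dop_ne_self h₂
  have hD : DCond O i j := hR.dCond_of_dCond_rop hDR hbelow
  have hdiag : entry O (i + 1) (j + 1) = 0 := by
    rw [← hR.entry_rop_succ_row]
    exact hDR.2.2.1
  have hRD : RCond (Dop O i j) (i + 1) j := hD.rCond_dop hR hdiag
  calc
    Dop (Rop O i j) i (j + 1)
        = moveEntry (moveEntry O (i, j) (i, j + 1)) (i, j + 1) (i + 1, j + 1) := by
      rw [hDR.dop_eq_moveEntry, hR.rop_eq_moveEntry]
    _ = moveEntry O (i, j) (i + 1, j + 1) :=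
      moveEntry_moveEntry (by simp) (by simp) (by simp) hR.2.1 hR.1 hR.2.2.1
    _ = moveEntry (moveEntry O (i, j) (i + 1, j)) (i + 1, j) (i + 1, j + 1) :=
      (moveEntry_moveEntry (by simp) (by simp) (by simp) hD.1 hD.2.1 hbelow).symm
    _ = Rop (Dop O i j) (i + 1) j := by
      rw [hRD.rop_eq_moveEntry, hD.dop_eq_moveEntry]

/-- If both operators in `D_{i,j+1} ∘ R_{i,j}` act nontrivially and
both operators in `R_{i+1,j} ∘ D_{i,j}` act nontrivially on an ordered matrix `O`,
then `D_{i,j+1} R_{i,j} O = R_{i+1,j} D_{i,j} O`. -/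
theorem statement3 {q p : ℕ} (O : Matrix (Fin q) (Fin p) ℕ) (hO : IsOrderedMatrix O)
    (i j : ℕ)
    (h₁ : Rop O i j ≠ O) (h₂ : Dop (Rop O i j) i (j+1) ≠ Rop O i j)
    (h₃ : Dop O i j ≠ O) (h₄ : Rop (Dop O i j) (i+1) j ≠ Dop O i j) :
    Dop (Rop O i j) i (j+1) = Rop (Dop O i j) (i+1) j := by
  exact statement3_general O i j (dCond_of_dop_ne_self h₃).2.2.1 h₁ h₂

end SU
end
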